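/- For every positive braid β on 4 strands, −σ(β) ≥ (5/12)·b₁(β) − 7/4. -/

import Mathlib

/-- The braid relations on `b` strands, as elements of the free group on the
Artin generators `a_1, …, a_{b-1}` (indexed by `Fin (b-1)`): the generators
`a_i` and `a_j` commute for `|i - j| ≥ 2` and braid for `|i - j| = 1`. -/
def braidRels (b : ℕ) : Set (FreeGroup (Fin (b - 1))) :=
  {r | (∃ i j : Fin (b - 1), (i : ℕ) + 2 ≤ (j : ℕ) ∧
          r = FreeGroup.of i * FreeGroup.of j * (FreeGroup.of i)⁻¹ * (FreeGroup.of j)⁻¹) ∨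
       (∃ i j : Fin (b - 1), (j : ℕ) = (i : ℕ) + 1 ∧
          r = FreeGroup.of i * FreeGroup.of j * FreeGroup.of i *
                (FreeGroup.of j * FreeGroup.of i * FreeGroup.of j)⁻¹)}

/-- The braid group `B_b` on `b` strands, presented by the Artin generators and relations. -/
def BraidGroup (b : ℕ) : Type := PresentedGroup (braidRels b)

instance (b : ℕ) : Group (BraidGroup b) :=
  inferInstanceAs (Group (PresentedGroup (braidRels b)))

/-- The Artin generator `a_{i+1}` of the braid group `B_b`. -/
def braidGen (b : ℕ) (i : Fin (b - 1)) : BraidGroup b := PresentedGroup.of i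

/-- The positive braid represented by a positive braid word (a list of letters,
the letter `i : Fin (b-1)` standing for the Artin generator `a_{i+1}`).
A braid `β` is positive of length `ℓ` if and only if `β = wordProd b w` for some
(equivalently, every) word `w` with `w.length = ℓ`. -/
def wordProd (b : ℕ) (w : List (Fin (b - 1))) : BraidGroup b :=
  (w.map (braidGen b)).prod

/-- Background data: the signature `σ` and first Betti number `b₁` of the closures of
braids, together with standard facts about them.  `sigma b β` is the signature of the
closure of `β ∈ B_b` (with the sign convention `σ(closure of a_1^n) = -n + 1`), and
`betti b β` is the minimal first Betti number of a Seifert surface for the closure. -/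
structure BraidLinkInvariants where
  sigma : ∀ b : ℕ, BraidGroup b → ℤ
  betti : ∀ b : ℕ, BraidGroup b → ℕ
  /-- Conjugate braids have the same closure, hence the same signature. -/
  sigma_conj : ∀ (b : ℕ) (α β : BraidGroup b), sigma b (α * β) = sigma b (β * α)
  /-- Conjugate braids have the same closure, hence the same first Betti number. -/
  betti_conj : ∀ (b : ℕ) (α β : BraidGroup b), betti b (α * β) = betti b (β * α)
  /-- The closure of the trivial braid is an unlink, which has signature `0`. -/
  sigma_one : ∀ b : ℕ, sigma b 1 = 0
  /-- Sign convention: the signature of the closure of `a_i ^ n` is `-n + 1`. -/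
  sigma_gen_pow : ∀ (b : ℕ) (i : Fin (b - 1)) (n : ℕ), 1 ≤ n →
      sigma b (braidGen b i ^ n) = 1 - (n : ℤ)
  /-- Adding or deleting one generator in a braid word changes the signature by at most `1`. -/
  sigma_insert : ∀ (b : ℕ) (α β : BraidGroup b) (i : Fin (b - 1)),
      |sigma b (α * braidGen b i * β) - sigma b (α * β)| ≤ 1
  /-- The signature is a quasimorphism of defect `b - 1` on `B_b`. -/
  sigma_quasi : ∀ (b : ℕ), 1 ≤ b → ∀ α β : BraidGroup b,
      |sigma b (α * β) - sigma b α - sigma b β| ≤ (b : ℤ) - 1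
  /-- Bennequin's formula: `b₁(β) = ℓ(β) - b + c(β)` for a positive braid `β`, where
  `c(β)` is `1` plus the number of Artin generators not appearing in a positive word for `β`. -/
  betti_eq : ∀ (b : ℕ), 1 ≤ b → ∀ w : List (Fin (b - 1)),
      (betti b (wordProd b w) : ℤ) = (w.length : ℤ) - (b : ℤ) +
        (1 + ((Finset.univ.filter (fun i : Fin (b - 1) => i ∉ w)).card : ℤ))

/-!
Scan a positive word `w` from the left, collecting in a prefix `m` the letters that have been
stripped off the remaining word `y`, and follow the potential `7σ(m y) + 7|m| + 3|y|`. Stripping a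
letter, after pulling it to the front by braid relations, raises the potential by `4`; deleting
one, which changes `σ` by at most `1`, lowers it by at most `10`. On four strands with only `a_1`
and `a_3` stripped, every sufficiently long remaining word can be shortened without lowering the
potential: either braid relations supply letters to strip, or a deleted `a_2` is followed by enough
of them. At the end only `m` is left, and `σ(m) = -|m| + O(1)` because `a_1` and `a_3` commute, so
`7σ(w) + 3|w|` is bounded independently of `w`. Applying this to the powers of `w` and using that
`σ` is a quasimorphism of defect `3` improves the bound to `7σ(w) + 3|w| ≤ 21`, that is
`-σ ≥ (3/7)·b₁ - 12/7` if all three generators occur in `w`; otherwise one has better bounds.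
As `3/7 > 5/12`, the theorem follows.
-/

section Words

variable {b : ℕ}

lemma wordProd_nil : wordProd b [] = 1 := rfl

lemma wordProd_cons (i : Fin (b - 1)) (w : List (Fin (b - 1))) :
    wordProd b (i :: w) = braidGen b i * wordProd b w := List.prod_cons

lemma wordProd_append (u v : List (Fin (b - 1))) :
    wordProd b (u ++ v) = wordProd b u * wordProd b v := by
  rw [wordProd, List.map_append, List.prod_append]; rfl

lemma wordProd_replicate (n : ℕ) (i : Fin (b - 1)) :
    wordProd b (List.replicate n i) = braidGen b i ^ n := by
  rw [wordProd, List.map_replicate, List.prod_replicate]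

lemma wordProd_flatten_replicate (n : ℕ) (w : List (Fin (b - 1))) :
    wordProd b (List.replicate n w).flatten = wordProd b w ^ n := by
  induction n with
  | zero => rw [pow_zero]; rfl
  | succ n ih => rw [List.replicate_succ, List.flatten_cons, wordProd_append, ih, pow_succ']

lemma semiconjBy_wordProd_map {f : Fin (b - 1) → Fin (b - 1)} {g : BraidGroup b}
    (h : ∀ i, SemiconjBy g (braidGen b i) (braidGen b (f i))) (w : List (Fin (b - 1))) :
    SemiconjBy g (wordProd b w) (wordProd b (w.map f)) := by
  induction w with
  | nil => exact SemiconjBy.one_right g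
  | cons i w ih => rw [List.map_cons, wordProd_cons, wordProd_cons]; exact (h i).mul_right ih

lemma exists_wordProd_eq_pow_mul_pow {i j : Fin (b - 1)}
    (hij : Commute (braidGen b i) (braidGen b j)) (w : List (Fin (b - 1)))
    (hw : ∀ k ∈ w, k = i ∨ k = j) :
    ∃ p q, p + q = w.length ∧ wordProd b w = braidGen b i ^ p * braidGen b j ^ q := by
  induction w with
  | nil => exact ⟨0, 0, rfl, (mul_one _).symm⟩
  | cons k w ih =>
    obtain ⟨p, q, hpq, hw'⟩ := ih fun l hl => hw l (List.mem_cons_of_mem k hl)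
    rw [wordProd_cons, hw', List.length_cons, ← hpq]
    rcases hw k List.mem_cons_self with rfl | rfl
    · exact ⟨p + 1, q, by omega, by rw [pow_succ', mul_assoc]⟩
    · exact ⟨p, q + 1, by omega, by
        rw [pow_succ', ← mul_assoc, ← (hij.pow_left p).eq, mul_assoc]⟩

end Words

section Relations

variable {b : ℕ} {i j k : Fin (b - 1)} {p q : List (Fin (b - 1))}

lemma braidGen_mul_comm (h : (i : ℕ) + 2 ≤ j) :
    braidGen b i * braidGen b j = braidGen b j * braidGen b i :=
  PresentedGroup.mk_eq_mk_of_mul_inv_mem (rels := braidRels b)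
    (x := FreeGroup.of i * FreeGroup.of j) (y := FreeGroup.of j * FreeGroup.of i)
    (.inl ⟨i, j, h, by rw [mul_inv_rev, ← mul_assoc]⟩)

lemma braidGen_braid (h : (i : ℕ) + 1 = j ∨ (j : ℕ) + 1 = i) :
    braidGen b i * braidGen b j * braidGen b i = braidGen b j * braidGen b i * braidGen b j := by
  rcases h with h | h
  · exact PresentedGroup.mk_eq_mk_of_mul_inv_mem (rels := braidRels b) (.inr ⟨i, j, h.symm, rfl⟩)
  · exact (PresentedGroup.mk_eq_mk_of_mul_inv_mem (rels := braidRels b)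
      (.inr ⟨j, i, h.symm, rfl⟩)).symm

lemma wordProd_braid (h : (i : ℕ) + 1 = j ∨ (j : ℕ) + 1 = i) (u v : List (Fin (b - 1))) :
    wordProd b (u ++ i :: j :: i :: v) = wordProd b (u ++ j :: i :: j :: v) := by
  simp only [wordProd_append, wordProd_cons, ← mul_assoc (braidGen b _), braidGen_braid h]

/-- A letter `i` can be pulled through the word `p` from right to left, becoming `j`:
`p i = j p` as braids. -/
def PullsThrough (p : List (Fin (b - 1))) (i j : Fin (b - 1)) : Prop :=
  SemiconjBy (wordProd b p) (braidGen b i) (braidGen b j)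

lemma PullsThrough.append (hp : PullsThrough p j k) (hq : PullsThrough q i j) :
    PullsThrough (p ++ q) i k := by
  rw [PullsThrough, wordProd_append]
  exact SemiconjBy.mul_left hp hq

lemma pullsThrough_nil (i : Fin (b - 1)) : PullsThrough [] i i :=
  SemiconjBy.one_left _

lemma pullsThrough_singleton (h : i = j ∨ (i : ℕ) + 2 ≤ j ∨ (j : ℕ) + 2 ≤ i) :
    PullsThrough [j] i i := by
  rw [PullsThrough, wordProd, List.map_singleton, List.prod_singleton]
  rcases h with rfl | h | h
  exacts [rfl, (braidGen_mul_comm h).symm, braidGen_mul_comm h]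

lemma pullsThrough_pair (h : (i : ℕ) + 1 = j ∨ (j : ℕ) + 1 = i) : PullsThrough [i, j] i j := by
  rw [PullsThrough, wordProd_cons, wordProd_cons, wordProd_nil, mul_one]
  simpa only [SemiconjBy, mul_assoc] using braidGen_braid h

lemma pullsThrough_palindrome (h : (i : ℕ) + 1 = j ∨ (j : ℕ) + 1 = i) :
    PullsThrough [j, i, i, j] i i :=
  (pullsThrough_pair h.symm).append (pullsThrough_pair h)

end Relations

section FourStrands

lemma PullsThrough.swap_outer {u v : List (Fin 3)} {i j : Fin 3}
    (h : PullsThrough (b := 4) (u ++ 2 :: 0 :: v) i j) :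
    PullsThrough (b := 4) (u ++ 0 :: 2 :: v) i j := by
  have hswap := braidGen_mul_comm (b := 4) (i := 0) (j := 2) le_rfl
  rw [PullsThrough, wordProd_append, wordProd_cons, wordProd_cons,
    ← mul_assoc (braidGen 4 _)] at h ⊢
  rwa [hswap]

lemma pullsThrough_middle_outer_outer_middle :
    PullsThrough (b := 4) [1, 0, 2, 1] 0 2 ∧ PullsThrough (b := 4) [1, 0, 2, 1] 2 0 := by
  constructor
  · exact ((pullsThrough_pair (.inl rfl)).append (pullsThrough_pair (.inl rfl))).swap_outer
      (u := [1]) (v := [1])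
  · exact (pullsThrough_pair (.inr rfl)).append (pullsThrough_pair (.inr rfl))

lemma pullsThrough_garside (i : Fin 3) : PullsThrough (b := 4) [0, 1, 0, 2, 1, 0] i i.rev := by
  have h01 : PullsThrough (b := 4) [0, 1] 0 1 := pullsThrough_pair (.inl rfl)
  have h10 : PullsThrough (b := 4) [1, 0] 1 0 := pullsThrough_pair (.inr rfl)
  have h12 : PullsThrough (b := 4) [1, 2] 1 2 := pullsThrough_pair (.inl rfl)
  have h21 : PullsThrough (b := 4) [2, 1] 2 1 := pullsThrough_pair (.inr rfl)
  have h0 : PullsThrough (b := 4) [0] 0 0 := pullsThrough_singleton (.inl rfl)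
  have h02 : PullsThrough (b := 4) [0] 2 2 := pullsThrough_singleton (.inr (.inr le_rfl))
  have h20 : PullsThrough (b := 4) [2] 0 0 := pullsThrough_singleton (.inr (.inl le_rfl))
  fin_cases i
  · exact ((h02.append h12).append (h01.append h0)).swap_outer (u := [0, 1]) (v := [1, 0])
  · exact (h01.append h0).append (h20.append h10)
  · exact (h0.append h10).append (h21.append h02)

end FourStrands

namespace BraidLinkInvariants

variable (S : BraidLinkInvariants)

section Signature

variable {b : ℕ} (α β : BraidGroup b) (i : Fin (b - 1))

lemma sigma_eq_of_semiconjBy {α β γ : BraidGroup b} (h : SemiconjBy γ α β) :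
    S.sigma b α = S.sigma b β := by
  obtain rfl : β = γ * α * γ⁻¹ := eq_mul_inv_of_mul_eq h.eq.symm
  rw [S.sigma_conj, inv_mul_cancel_left]

lemma sigma_delete_le : S.sigma b (α * braidGen b i * β) ≤ S.sigma b (α * β) + 1 := by
  linarith [(abs_le.1 (S.sigma_insert b α β i)).2]

lemma sigma_insert_le : S.sigma b (α * β) ≤ S.sigma b (α * braidGen b i * β) + 1 := by
  linarith [(abs_le.1 (S.sigma_insert b α β i)).1]

lemma sigma_gen_pow_le (n : ℕ) : S.sigma b (braidGen b i ^ n) ≤ 1 - n := by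
  rcases n.eq_zero_or_pos with rfl | hn
  · rw [pow_zero, S.sigma_one]; norm_num
  · exact (S.sigma_gen_pow b i n hn).le

lemma sigma_wordProd_le_of_commute {i j : Fin (b - 1)}
    (hij : Commute (braidGen b i) (braidGen b j)) (w : List (Fin (b - 1)))
    (hw : ∀ k ∈ w, k = i ∨ k = j) :
    S.sigma b (wordProd b w) ≤ b + 1 - w.length := by
  obtain ⟨p, q, hpq, hprod⟩ := exists_wordProd_eq_pow_mul_pow hij w hw
  have hb : 1 ≤ b := by have := i.isLt; omega
  rw [hprod, ← hpq, Nat.cast_add]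
  linarith [(abs_le.1 (S.sigma_quasi b hb (braidGen b i ^ p) (braidGen b j ^ q))).2,
    S.sigma_gen_pow_le i p, S.sigma_gen_pow_le j q]

lemma mul_sigma_le_sigma_pow (hb : 1 ≤ b) (n : ℕ) :
    (n + 1) * S.sigma b α ≤ S.sigma b (α ^ (n + 1)) + (b - 1) * n := by
  induction n with
  | zero => simp
  | succ n ih =>
    have h := (abs_le.1 (S.sigma_quasi b hb (α ^ (n + 1)) α)).1
    rw [← pow_succ] at h
    push_cast
    linarith

/-- The quasimorphism inequality for `w ^ (n + 1)`, divided by `n + 1`, absorbs `K` as `n → ∞`. -/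
lemma mul_sigma_add_mul_length_le {c d K : ℤ} (hb : 1 ≤ b) (hc : 0 ≤ c)
    (w : List (Fin (b - 1)))
    (h : ∀ n : ℕ, c * S.sigma b (wordProd b (List.replicate n w).flatten) +
      d * (List.replicate n w).flatten.length ≤ K) :
    c * S.sigma b (wordProd b w) + d * w.length ≤ c * (b - 1) := by
  by_contra! hlt
  obtain ⟨n, hn⟩ : ∃ n : ℕ, K ≤ n := ⟨K.natAbs, Int.le_natAbs⟩
  have hpow := mul_le_mul_of_nonneg_left (S.mul_sigma_le_sigma_pow (wordProd b w) hb n) hc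
  have hK := h (n + 1)
  rw [wordProd_flatten_replicate, List.length_flatten, List.map_replicate, List.sum_replicate,
    smul_eq_mul] at hK
  have hgap : (0 : ℤ) ≤
      (n + 1) * (c * S.sigma b (wordProd b w) + d * w.length - c * (b - 1) - 1) :=
    mul_nonneg (by positivity) (by linarith)
  have hdefect : 0 ≤ c * (b - 1 : ℤ) := mul_nonneg hc (by omega)
  push_cast at hK
  linarith

lemma sigma_wordProd_map_rev (w : List (Fin (4 - 1))) :
    S.sigma 4 (wordProd 4 (w.map Fin.rev)) = S.sigma 4 (wordProd 4 w) :=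
  (S.sigma_eq_of_semiconjBy (semiconjBy_wordProd_map pullsThrough_garside w)).symm

end Signature

/-- `C` bounds the potential `7σ(m y) + 7|m| + 3|y|` for all words `m` in the letters `A`. Here `m`
consists of the letters already stripped off a word and `y` is what remains of it; a remaining
letter weighs `3`, the slope to be proved, and a stripped one `7`, as it contributes about
`-1` to the signature once `y` is used up. -/
def PotentialLE (b : ℕ) (A : Set (Fin (b - 1))) (C : ℤ) (y : List (Fin (b - 1))) : Prop :=
  ∀ m : List (Fin (b - 1)), (∀ i ∈ m, i ∈ A) →
    7 * S.sigma b (wordProd b (m ++ y)) + 7 * m.length + 3 * y.length ≤ C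

namespace PotentialLE

variable {S} {b : ℕ} {A : Set (Fin (b - 1))} {C D : ℤ} {i j x z : Fin (b - 1)}
  {p q t y : List (Fin (b - 1))}

lemma mono (h : S.PotentialLE b A C y) (hCD : C ≤ D) : S.PotentialLE b A D y :=
  fun m hm => (h m hm).trans hCD

lemma congr (h : S.PotentialLE b A C y) (hprod : wordProd b q = wordProd b y)
    (hlen : q.length = y.length) : S.PotentialLE b A C q := by
  intro m hm
  have hpot := h m hm
  rwa [wordProd_append, ← hprod, ← wordProd_append, ← hlen] at hpot

lemma strip (h : S.PotentialLE b A C (p ++ t)) (hp : PullsThrough p x z) (hz : z ∈ A) :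
    S.PotentialLE b A (C - 4) (p ++ x :: t) := by
  intro m hm
  have hprod : wordProd b (m ++ (p ++ x :: t)) = wordProd b (m ++ [z] ++ (p ++ t)) := by
    simp only [wordProd_append, wordProd_cons, wordProd_nil, mul_one, mul_assoc,
      ← mul_assoc (wordProd b p) (braidGen b x), hp.eq]
  have hpot := h (m ++ [z]) (by
    simpa only [List.forall_mem_append, List.forall_mem_singleton] using ⟨hm, hz⟩)
  simp only [hprod, List.length_append, List.length_cons, List.length_nil] at hpot ⊢
  push_cast at hpot ⊢
  linarith

lemma delete (h : S.PotentialLE b A C (p ++ t)) (i : Fin (b - 1)) :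
    S.PotentialLE b A (C + 10) (p ++ i :: t) := by
  intro m hm
  have hpot := h m hm
  have hσ := S.sigma_delete_le (wordProd b (m ++ p)) (wordProd b t) i
  rw [mul_assoc, ← wordProd_cons, ← wordProd_append, ← wordProd_append, List.append_assoc,
    List.append_assoc] at hσ
  simp only [List.length_append, List.length_cons] at hpot ⊢
  push_cast at hpot ⊢
  linarith

lemma insert (h : S.PotentialLE b A C (p ++ i :: t)) : S.PotentialLE b A (C + 4) (p ++ t) := by
  intro m hm
  have hpot := h m hm
  have hσ := S.sigma_insert_le (wordProd b (m ++ p)) (wordProd b t) i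
  rw [mul_assoc, ← wordProd_cons, ← wordProd_append, ← wordProd_append, List.append_assoc,
    List.append_assoc] at hσ
  simp only [List.length_append, List.length_cons] at hpot ⊢
  push_cast at hpot ⊢
  linarith

lemma of_length_le (h : S.PotentialLE b A C []) (hy : 10 * (y.length : ℤ) ≤ D - C) :
    S.PotentialLE b A D y := by
  induction y generalizing D with
  | nil => exact h.mono (by rwa [List.length_nil, Nat.cast_zero, mul_zero, sub_nonneg] at hy)
  | cons i y ih =>
    push_cast [List.length_cons] at hy
    exact ((ih (D := D - 10) (by linarith)).delete (p := []) i).mono (by linarith)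

lemma drop_pair {x y x' y' : Fin (b - 1)} (h : S.PotentialLE b A C (p ++ t)) (j : Fin (b - 1))
    (hx : PullsThrough p x x') (hx' : x' ∈ A) (hy : PullsThrough p y y') (hy' : y' ∈ A) :
    S.PotentialLE b A (C + 2) (p ++ j :: x :: y :: t) :=
  (((h.strip hy hy').strip hx hx').delete j).mono (by linarith)

lemma drop_triple {x y z x' y' z' : Fin (b - 1)} (h : S.PotentialLE b A C (p ++ t))
    (j : Fin (b - 1)) (hx : PullsThrough p x x') (hx' : x' ∈ A) (hy : PullsThrough p y y')
    (hy' : y' ∈ A) (hz : PullsThrough p z z') (hz' : z' ∈ A) :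
    S.PotentialLE b A (C - 2) (p ++ j :: x :: y :: z :: t) :=
  ((h.strip hz hz').drop_pair j hx hx' hy hy').mono (by linarith)

lemma braid (h : S.PotentialLE b A C (p ++ j :: i :: t))
    (hij : (i : ℕ) + 1 = j ∨ (j : ℕ) + 1 = i) (hp : PullsThrough p i z) (hz : z ∈ A) :
    S.PotentialLE b A (C - 4) (p ++ j :: i :: j :: t) := by
  have happ (v : List (Fin (b - 1))) : p ++ j :: i :: v = (p ++ [j, i]) ++ v := by
    rw [List.append_assoc]; rfl
  rw [happ] at h ⊢
  exact h.strip (hp.append (pullsThrough_pair hij.symm)) hz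

lemma square (h : S.PotentialLE b A C (p ++ j :: i :: t))
    (hij : (i : ℕ) + 1 = j ∨ (j : ℕ) + 1 = i) (hp : PullsThrough p i z) (hz : z ∈ A) :
    S.PotentialLE b A C (p ++ j :: j :: t) := by
  have hb := h.braid hij hp hz
  rw [List.append_cons] at hb ⊢
  exact hb.insert.mono (by linarith)

lemma cube (h : S.PotentialLE b A C (p ++ j :: i :: t))
    (hij : (i : ℕ) + 1 = j ∨ (j : ℕ) + 1 = i) (hp : PullsThrough p i z) (hz : z ∈ A) :
    S.PotentialLE b A (C - 4) (p ++ j :: j :: j :: t) :=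
  (h.braid hij hp hz).square hij hp hz

/-- As braids, `j j i j = j i j i`, and `j i` pulls `j` back to `i`. -/
lemma square_braid (h : S.PotentialLE b A C (p ++ j :: i :: i :: t))
    (hij : (i : ℕ) + 1 = j ∨ (j : ℕ) + 1 = i) (hp : PullsThrough p i z) (hz : z ∈ A) :
    S.PotentialLE b A (C - 4) (p ++ j :: j :: i :: j :: t) := by
  refine (h.braid (t := i :: t) hij hp hz).congr ?_ ?_
  · rw [List.append_cons, wordProd_braid hij.symm, ← List.append_cons]
  · simp only [List.length_append, List.length_cons]

lemma cons (h : S.PotentialLE b A C t) (hx : x ∈ A) : S.PotentialLE b A (C - 4) (x :: t) :=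
  h.strip (p := []) (pullsThrough_nil x) hx

lemma cons_pair {x y : Fin (b - 1)} (h : S.PotentialLE b A C t) (j : Fin (b - 1))
    (hx : x ∈ A) (hy : y ∈ A) : S.PotentialLE b A (C + 2) (j :: x :: y :: t) :=
  h.drop_pair (p := []) j (pullsThrough_nil x) hx (pullsThrough_nil y) hy

lemma cons_triple {x y : Fin (b - 1)} (h : S.PotentialLE b A C t) (j : Fin (b - 1))
    (hx : x ∈ A) (hy : y ∈ A) (hz : z ∈ A) :
    S.PotentialLE b A (C - 2) (j :: x :: y :: z :: t) :=
  h.drop_triple (p := []) j (pullsThrough_nil x) hx (pullsThrough_nil y) hy (pullsThrough_nil z) hz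

lemma middle_middle {a : Fin (b - 1)} (ha : a ∈ A)
    (hA : ∀ x ∈ A, (x : ℕ) + 1 = j ∨ (j : ℕ) + 1 = x) (ht : ∀ x ∈ t, x = j ∨ x ∈ A)
    (hnil : S.PotentialLE b A (C - 12) [])
    (ih : ∀ y, y.length < t.length + 2 → (∀ x ∈ y, x = j ∨ x ∈ A) → S.PotentialLE b A C y) :
    S.PotentialLE b A (C - 2) (j :: j :: t) := by
  have hsquare {x t} {D : ℤ} (hx : x ∈ A) (h : S.PotentialLE b A D (j :: x :: t)) :
      S.PotentialLE b A D (j :: j :: t) :=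
    h.square (p := []) (hA x hx) (pullsThrough_nil x) hx
  rcases t with _ | ⟨x, t⟩
  · exact (hsquare ha ((hnil.cons ha).delete (p := []) j)).mono (by linarith)
  rw [List.forall_mem_cons] at ht
  rcases ht.1 with hx | hx
  · subst x
    exact ((ih (j :: a :: t) (by grind) (by grind)).cube (p := []) (hA a ha)
      (pullsThrough_nil a) ha).mono (by linarith)
  rcases t with _ | ⟨y, t⟩
  · exact (hsquare hx (hnil.cons_pair j hx hx)).mono (by linarith)
  rw [List.forall_mem_cons] at ht
  rcases ht.2.1 with hy | hy
  · subst y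
    exact ((ih (j :: x :: x :: t) (by grind) (by grind)).square_braid (p := []) (hA x hx)
      (pullsThrough_nil x) hx).mono (by linarith)
  · exact hsquare hx ((ih t (by grind) (by grind)).cons_triple j hx hx hy)

lemma of_forall_mem_adjacent (hij : (i : ℕ) + 1 = j ∨ (j : ℕ) + 1 = i)
    (hnil : S.PotentialLE b {i} (C - 12) []) (y : List (Fin (b - 1)))
    (hy : ∀ x ∈ y, x = j ∨ x = i) : S.PotentialLE b {i} C y := by
  have hi : i ∈ ({i} : Set (Fin (b - 1))) := rfl
  have hb : S.PotentialLE b {i} (C - 2) [j] := (hnil.delete (p := []) j).mono (by linarith)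
  induction hn : y.length using Nat.strong_induction_on generalizing y with | _ n ih =>
  subst hn
  replace ih (z) (hz : z.length < y.length) (hz') := ih _ hz z hz' rfl
  have hsq {t} (ht : t.length + 2 ≤ y.length) (ht' : ∀ x ∈ t, x = j ∨ x = i) :
      S.PotentialLE b {i} (C - 2) (j :: j :: t) :=
    middle_middle hi (fun x hx => hx ▸ hij) ht' hnil fun z hz => ih z (by omega)
  rcases y with _ | ⟨x, y⟩
  · exact hnil.mono (by linarith)
  rw [List.forall_mem_cons] at hy
  rcases hy with ⟨hx | hx, hy⟩ <;> subst x
  swap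
  · exact ((ih y (by grind) hy).cons hi).mono (by linarith)
  rcases y with _ | ⟨x, y⟩
  · exact hb.mono (by linarith)
  rw [List.forall_mem_cons] at hy
  rcases hy with ⟨hx | hx, hy⟩ <;> subst x
  · exact (hsq (by grind) hy).mono (by linarith)
  rcases y with _ | ⟨x, y⟩
  · exact ((hnil.cons hi).delete (p := []) j).mono (by linarith)
  rw [List.forall_mem_cons] at hy
  rcases hy with ⟨hx | hx, hy⟩ <;> subst x
  · exact ((ih (j :: i :: y) (by grind) (by grind)).braid (p := []) hij (pullsThrough_nil i)
      hi).mono (by linarith)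
  rcases y with _ | ⟨x, y⟩
  · exact (hnil.cons_pair j hi hi).mono (by linarith)
  rw [List.forall_mem_cons] at hy
  rcases hy with ⟨hx | hx, hy⟩ <;> subst x
  swap
  · exact ((ih y (by grind) hy).cons_triple j hi hi hi).mono (by linarith)
  rcases y with _ | ⟨x, y⟩
  · exact (hb.cons_pair j hi hi).mono (by linarith)
  rw [List.forall_mem_cons] at hy
  rcases hy with ⟨hx | hx, hy⟩ <;> subst x
  · exact ((hsq (by grind) hy).cons_pair j hi hi).mono (by linarith)
  · exact ((ih (j :: i :: i :: j :: y) (by grind) (by grind)).strip (p := [j, i, i, j])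
      (pullsThrough_palindrome hij) hi).mono (by linarith)

section FourStrands

@[elab_as_elim]
lemma word_cases {motive : List (Fin (4 - 1)) → Prop} (t : List (Fin (4 - 1)))
    (nil : motive []) (zero : ∀ t, motive (0 :: t)) (one : ∀ t, motive (1 :: t))
    (two : ∀ t, motive (2 :: t)) : motive t := by
  rcases t with _ | ⟨x, t⟩
  · exact nil
  obtain rfl | rfl | rfl : x = 0 ∨ x = 1 ∨ x = 2 := by decide +revert
  exacts [zero t, one t, two t]

lemma zero_mem_outer : (0 : Fin (4 - 1)) ∈ ({0, 2} : Set (Fin (4 - 1))) := .inl rfl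

lemma two_mem_outer : (2 : Fin (4 - 1)) ∈ ({0, 2} : Set (Fin (4 - 1))) := .inr rfl

lemma pullsThrough_baabcc : PullsThrough (b := 4) [1, 0, 0, 1, 2, 2] 0 0 :=
  ((pullsThrough_palindrome (.inl rfl)).append (pullsThrough_singleton (.inr (.inl le_rfl)))).append
    (pullsThrough_singleton (.inr (.inl le_rfl)))

variable {t : List (Fin (4 - 1))}

/-! The letters `0`, `1`, `2` are called `a`, `b`, `c` in lemma names. The allowance `100` in
`hnil` pays for deleting all letters of a short word. -/

lemma prefix_baabccb_then_c (q : List (Fin (4 - 1))) (hq : PullsThrough q 2 2)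
    (h : S.PotentialLE 4 {0, 2} C ([1, 2, 2, 1] ++ q ++ t)) :
    S.PotentialLE 4 {0, 2} (C - 2) ([1, 0, 0, 1, 2, 2, 1] ++ q ++ 2 :: t) := by
  have hstrip := h.strip (p := [1, 2, 2, 1] ++ q)
    ((pullsThrough_palindrome (.inr rfl)).append hq) two_mem_outer
  exact (hstrip.cons_pair 1 zero_mem_outer zero_mem_outer).mono (by linarith)

lemma prefix_baabccbb (hnil : S.PotentialLE 4 {0, 2} (C - 100) [])
    (ih : ∀ y, y.length < t.length + 8 → S.PotentialLE 4 {0, 2} C y) :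
    S.PotentialLE 4 {0, 2} (C - 2) ([1, 0, 0, 1, 2, 2] ++ 1 :: 1 :: t) := by
  have hsquare {t} {D : ℤ} (h : S.PotentialLE 4 {0, 2} D ([1, 0, 0, 1, 2, 2] ++ 1 :: 0 :: t)) :
      S.PotentialLE 4 {0, 2} D ([1, 0, 0, 1, 2, 2] ++ 1 :: 1 :: t) :=
    h.square (.inl rfl) pullsThrough_baabcc zero_mem_outer
  have h02 : PullsThrough (b := 4) [0] 2 2 := pullsThrough_singleton (.inr (.inr le_rfl))
  cases t using word_cases with
  | nil => exact hnil.of_length_le (by norm_num)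
  | one t =>
    exact ((ih ([1, 0, 0, 1, 2, 2] ++ 1 :: 0 :: t) (by grind)).cube (.inl rfl) pullsThrough_baabcc
      zero_mem_outer).mono (by linarith)
  | two t => exact hsquare (prefix_baabccb_then_c [0] h02 (ih _ (by grind)))
  | zero t =>
  cases t using word_cases with
  | nil => exact hnil.of_length_le (by norm_num)
  | zero t =>
    exact hsquare ((ih ([1, 0, 0, 1, 2, 2] ++ t) (by grind)).drop_triple 1 pullsThrough_baabcc
      zero_mem_outer pullsThrough_baabcc zero_mem_outer pullsThrough_baabcc zero_mem_outer)
  | one t =>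
    exact ((ih ([1, 0, 0, 1, 2, 2] ++ 1 :: 0 :: 0 :: t) (by grind)).square_braid (.inl rfl)
      pullsThrough_baabcc zero_mem_outer).mono (by linarith)
  | two t => exact hsquare (prefix_baabccb_then_c [0, 0] (h02.append h02) (ih _ (by grind)))

lemma prefix_baabccbaab (hnil : S.PotentialLE 4 {0, 2} (C - 100) [])
    (ih : ∀ y, y.length < t.length + 10 → S.PotentialLE 4 {0, 2} C y) :
    S.PotentialLE 4 {0, 2} C ([1, 0, 0, 1, 2, 2] ++ 1 :: 0 :: 0 :: 1 :: t) := by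
  cases t using word_cases with
  | nil => exact hnil.of_length_le (by norm_num)
  | zero t =>
    exact ((ih ([1, 0, 0, 1, 2, 2, 1, 0, 0, 1] ++ t) (by simp +arith)).strip
      (pullsThrough_baabcc.append (pullsThrough_palindrome (.inl rfl))) zero_mem_outer).mono
      (by linarith)
  | one t =>
    exact ((prefix_baabccbb (t := t) hnil fun y hy => ih y (by grind)).drop_pair 1
      pullsThrough_baabcc zero_mem_outer pullsThrough_baabcc zero_mem_outer).mono (by linarith)
  | two t =>
    exact ((prefix_baabccb_then_c [] (pullsThrough_nil 2) (ih _ (by grind))).drop_pair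
      (p := [1, 0, 0, 1, 2, 2]) (t := 1 :: 2 :: t) 1 pullsThrough_baabcc
      zero_mem_outer pullsThrough_baabcc zero_mem_outer).mono (by linarith)

lemma prefix_baabccba (hnil : S.PotentialLE 4 {0, 2} (C - 100) [])
    (ih : ∀ y, y.length < t.length + 8 → S.PotentialLE 4 {0, 2} C y) :
    S.PotentialLE 4 {0, 2} C ([1, 0, 0, 1, 2, 2] ++ 1 :: 0 :: t) := by
  have h02 : PullsThrough (b := 4) [0] 2 2 := pullsThrough_singleton (.inr (.inr le_rfl))
  cases t using word_cases with
  | nil => exact hnil.of_length_le (by norm_num)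
  | one t =>
    exact ((ih ([1, 0, 0, 1, 2, 2] ++ 1 :: 0 :: t) (by grind)).braid (.inl rfl)
      pullsThrough_baabcc zero_mem_outer).mono (by linarith)
  | two t => exact (prefix_baabccb_then_c [0] h02 (ih _ (by grind))).mono (by linarith)
  | zero t =>
  cases t using word_cases with
  | nil => exact hnil.of_length_le (by norm_num)
  | zero t =>
    exact ((ih ([1, 0, 0, 1, 2, 2] ++ t) (by grind)).drop_triple 1 pullsThrough_baabcc
      zero_mem_outer pullsThrough_baabcc zero_mem_outer pullsThrough_baabcc zero_mem_outer).mono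
      (by linarith)
  | one t => exact prefix_baabccbaab hnil fun y hy => ih y (by grind)
  | two t =>
    exact (prefix_baabccb_then_c [0, 0] (h02.append h02) (ih _ (by grind))).mono (by linarith)

lemma prefix_bb (hnil : S.PotentialLE 4 {0, 2} (C - 100) [])
    (ih : ∀ y, y.length < t.length + 2 → S.PotentialLE 4 {0, 2} C y) :
    S.PotentialLE 4 {0, 2} (C - 2) (1 :: 1 :: t) := by
  have hletter : ∀ x : Fin (4 - 1), x = 1 ∨ x = 0 ∨ x = 2 := by decide
  refine middle_middle zero_mem_outer ?_ (fun x _ => hletter x) (hnil.mono (by linarith))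
    fun y hy _ => ih y hy
  rintro x (rfl | rfl)
  exacts [.inl rfl, .inr rfl]

lemma prefix_baabcc (hnil : S.PotentialLE 4 {0, 2} (C - 100) [])
    (ih : ∀ y, y.length < t.length + 6 → S.PotentialLE 4 {0, 2} C y) :
    S.PotentialLE 4 {0, 2} C (1 :: 0 :: 0 :: 1 :: 2 :: 2 :: t) := by
  cases t using word_cases with
  | nil => exact hnil.of_length_le (by norm_num)
  | zero t =>
    exact ((ih ([1, 0, 0, 1, 2, 2] ++ t) (by simp +arith)).strip pullsThrough_baabcc
      zero_mem_outer).mono (by linarith)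
  | two t =>
    exact (((ih t (by grind)).cons_triple 1 two_mem_outer two_mem_outer two_mem_outer).cons_pair 1
      zero_mem_outer zero_mem_outer).mono (by linarith)
  | one t =>
  cases t using word_cases with
  | nil => exact hnil.of_length_le (by norm_num)
  | zero t => exact prefix_baabccba hnil fun y hy => ih y (by grind)
  | one t =>
    exact (prefix_baabccba hnil fun y hy => ih y (by grind)).square (.inl rfl) pullsThrough_baabcc
      zero_mem_outer
  | two t =>
    exact (prefix_baabccb_then_c [] (pullsThrough_nil 2) (ih _ (by simp +arith))).mono
      (by linarith)

lemma prefix_baab (hnil : S.PotentialLE 4 {0, 2} (C - 100) [])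
    (ih : ∀ y, y.length < t.length + 4 → S.PotentialLE 4 {0, 2} C y) :
    S.PotentialLE 4 {0, 2} C (1 :: 0 :: 0 :: 1 :: t) := by
  have hpal : PullsThrough (b := 4) [1, 0, 0, 1] 0 0 := pullsThrough_palindrome (.inl rfl)
  have hpal' : PullsThrough (b := 4) [1, 0, 0, 1, 2] 0 0 :=
    hpal.append (pullsThrough_singleton (.inr (.inl le_rfl)))
  cases t using word_cases with
  | nil => exact hnil.of_length_le (by norm_num)
  | zero t =>
    exact ((ih ([1, 0, 0, 1] ++ t) (by simp +arith)).strip hpal zero_mem_outer).mono (by linarith)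
  | one t =>
    exact ((prefix_bb hnil fun y hy => ih y (by grind)).cons_pair 1
      zero_mem_outer zero_mem_outer).mono (by linarith)
  | two t =>
  cases t using word_cases with
  | nil => exact hnil.of_length_le (by norm_num)
  | zero t =>
    exact ((ih ([1, 0, 0, 1, 2] ++ t) (by simp +arith)).strip hpal' zero_mem_outer).mono
      (by linarith)
  | one t =>
    exact (((ih (1 :: 2 :: t) (by grind)).braid (p := []) (.inr rfl) (pullsThrough_nil 2)
      two_mem_outer).cons_pair 1 zero_mem_outer zero_mem_outer).mono (by linarith)
  | two t => exact prefix_baabcc hnil fun y hy => ih y (by grind)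

lemma prefix_bac (hnil : S.PotentialLE 4 {0, 2} (C - 100) [])
    (ih : ∀ y, y.length < t.length + 3 → S.PotentialLE 4 {0, 2} C y) :
    S.PotentialLE 4 {0, 2} C (1 :: 0 :: 2 :: t) := by
  cases t using word_cases with
  | nil => exact hnil.of_length_le (by norm_num)
  | zero t =>
    exact ((ih t (by grind)).cons_triple 1 zero_mem_outer two_mem_outer zero_mem_outer).mono
      (by linarith)
  | two t =>
    exact ((ih t (by grind)).cons_triple 1 zero_mem_outer two_mem_outer two_mem_outer).mono
      (by linarith)
  | one t =>
  cases t using word_cases with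
  | nil => exact hnil.of_length_le (by norm_num)
  | zero t =>
    exact ((ih ([1, 0, 2, 1] ++ t) (by simp +arith)).strip
      pullsThrough_middle_outer_outer_middle.1 two_mem_outer).mono (by linarith)
  | one t =>
    exact ((prefix_bb hnil fun y hy => ih y (by grind)).cons_pair 1
      zero_mem_outer two_mem_outer).mono (by linarith)
  | two t =>
    exact ((ih ([1, 0, 2, 1] ++ t) (by simp +arith)).strip
      pullsThrough_middle_outer_outer_middle.2 zero_mem_outer).mono (by linarith)

lemma prefix_ba (hnil : S.PotentialLE 4 {0, 2} (C - 100) [])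
    (ih : ∀ y, y.length < t.length + 2 → S.PotentialLE 4 {0, 2} C y) :
    S.PotentialLE 4 {0, 2} C (1 :: 0 :: t) := by
  cases t using word_cases with
  | nil => exact hnil.of_length_le (by norm_num)
  | one t =>
    exact ((ih (1 :: 0 :: t) (by grind)).braid (p := []) (.inl rfl) (pullsThrough_nil 0)
      zero_mem_outer).mono (by linarith)
  | two t => exact prefix_bac hnil fun y hy => ih y (by grind)
  | zero t =>
  cases t using word_cases with
  | nil => exact hnil.of_length_le (by norm_num)
  | zero t =>
    exact ((ih t (by grind)).cons_triple 1 zero_mem_outer zero_mem_outer zero_mem_outer).mono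
      (by linarith)
  | one t => exact prefix_baab hnil fun y hy => ih y (by grind)
  | two t =>
    exact ((ih t (by grind)).cons_triple 1 zero_mem_outer zero_mem_outer two_mem_outer).mono
      (by linarith)

lemma map_rev (h : S.PotentialLE 4 {0, 2} C t) : S.PotentialLE 4 {0, 2} C (t.map Fin.rev) := by
  intro m hm
  have hm' : ∀ i ∈ m.map Fin.rev, i ∈ ({0, 2} : Set (Fin (4 - 1))) := by
    rw [List.forall_mem_map]
    intro i hi
    rcases hm i hi with rfl | rfl
    exacts [two_mem_outer, zero_mem_outer]
  have hpot := h (m.map Fin.rev) hm'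
  rw [← sigma_wordProd_map_rev, List.map_append, List.map_map, Fin.rev_involutive.comp_self,
    List.map_id, List.length_map] at hpot
  rwa [List.length_map]

lemma of_nil (hnil : S.PotentialLE 4 {0, 2} (C - 100) []) (y : List (Fin (4 - 1))) :
    S.PotentialLE 4 {0, 2} C y := by
  induction hn : y.length using Nat.strong_induction_on generalizing y with | _ n ih =>
  subst hn
  replace ih (z) (hz : z.length < y.length) := ih _ hz z rfl
  cases y using word_cases with
  | nil => exact hnil.mono (by linarith)
  | zero t => exact ((ih t (by simp)).cons zero_mem_outer).mono (by linarith)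
  | two t => exact ((ih t (by simp)).cons two_mem_outer).mono (by linarith)
  | one t =>
  cases t using word_cases with
  | nil => exact hnil.of_length_le (by norm_num)
  | zero t => exact prefix_ba hnil ih
  | one t =>
    exact (prefix_ba (t := t) hnil ih).square (p := []) (.inl rfl) (pullsThrough_nil 0)
      zero_mem_outer
  | two t =>
    have hrev : (1 :: 0 :: t.map Fin.rev).map Fin.rev = 1 :: 2 :: t := by
      rw [List.map_cons, List.map_cons, List.map_map, Fin.rev_involutive.comp_self, List.map_id]
      rfl
    exact hrev ▸ (prefix_ba (t := t.map Fin.rev) hnil (by rwa [List.length_map])).map_rev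

end FourStrands

end PotentialLE

section Bounds

variable {b : ℕ} {i j : Fin (b - 1)}

lemma potentialLE_singleton_nil (i : Fin (b - 1)) : S.PotentialLE b {i} 7 [] := by
  intro m hm
  rw [List.eq_replicate_of_mem hm, List.append_nil, wordProd_replicate, List.length_replicate]
  push_cast [List.length_nil]
  linarith [S.sigma_gen_pow_le i m.length]

lemma potentialLE_pair_nil (hij : Commute (braidGen b i) (braidGen b j)) :
    S.PotentialLE b {i, j} (7 * (b + 1)) [] := by
  intro m hm
  rw [List.append_nil]
  push_cast [List.length_nil]
  linarith [S.sigma_wordProd_le_of_commute hij m hm]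

lemma seven_mul_sigma_add_three_mul_length_le_of_adjacent
    (hij : (i : ℕ) + 1 = j ∨ (j : ℕ) + 1 = i) {w : List (Fin (b - 1))} (hi : i ∈ w)
    (hw : ∀ k ∈ w, k = j ∨ k = i) : 7 * S.sigma b (wordProd b w) + 3 * w.length ≤ 15 := by
  obtain ⟨u, v, rfl⟩ := List.append_of_mem hi
  have hrot : S.sigma b (wordProd b (u ++ i :: v)) = S.sigma b (wordProd b ([i] ++ (v ++ u))) := by
    rw [wordProd_append, S.sigma_conj, ← wordProd_append]; rfl
  have hpot : S.PotentialLE b {i} 19 (v ++ u) :=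
    .of_forall_mem_adjacent hij (S.potentialLE_singleton_nil i) (v ++ u) fun k hk => by
      rw [List.mem_append] at hk
      exact hw k (List.mem_append.2 (hk.symm.imp_right (List.mem_cons_of_mem i)))
  have hle := hpot [i] (by simp)
  rw [hrot]
  simp only [List.length_append, List.length_cons, List.length_nil] at hle ⊢
  push_cast at hle ⊢
  linarith

lemma sigma_add_length_le_of_commute (hij : Commute (braidGen b i) (braidGen b j))
    {w : List (Fin (b - 1))} (hw : ∀ k ∈ w, k = i ∨ k = j) :
    S.sigma b (wordProd b w) + w.length ≤ b - 1 := by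
  have h := S.mul_sigma_add_mul_length_le (c := 1) (d := 1) (K := b + 1)
    (by have := i.isLt; omega) zero_le_one w fun n => by
      have hpow := S.sigma_wordProd_le_of_commute hij (List.replicate n w).flatten (by
        simp only [List.mem_flatten, List.mem_replicate]
        rintro k ⟨_, ⟨-, rfl⟩, hk⟩
        exact hw k hk)
      linarith
  linarith

lemma seven_mul_sigma_add_three_mul_length_le (w : List (Fin (4 - 1))) :
    7 * S.sigma 4 (wordProd 4 w) + 3 * w.length ≤ 21 := by
  refine S.mul_sigma_add_mul_length_le (K := 135) (by norm_num) (by norm_num) w fun n => ?_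
  have hnil : S.PotentialLE 4 {0, 2} (135 - 100) [] :=
    S.potentialLE_pair_nil (braidGen_mul_comm le_rfl)
  have hpot := hnil.of_nil (List.replicate n w).flatten [] (List.forall_mem_nil _)
  rwa [List.nil_append, List.length_nil, Nat.cast_zero, mul_zero, add_zero] at hpot

lemma seven_mul_sigma_add_three_mul_betti_le (w : List (Fin (4 - 1))) :
    7 * S.sigma 4 (wordProd 4 w) + 3 * S.betti 4 (wordProd 4 w) ≤ 12 := by
  have hletter : ∀ k : Fin (4 - 1), k = 0 ∨ k = 1 ∨ k = 2 := by decide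
  rw [S.betti_eq 4 (by norm_num), Finset.card_filter, Fin.sum_univ_three]
  by_cases h2 : 2 ∈ w <;> by_cases h0 : 0 ∈ w
  · have hlen : 1 ≤ w.length := List.length_pos_of_mem h0
    by_cases h1 : 1 ∈ w
    · have hle := S.seven_mul_sigma_add_three_mul_length_le w
      grind
    · have hle := S.sigma_add_length_le_of_commute (i := 0) (j := 2) (braidGen_mul_comm le_rfl)
        (w := w) (by grind)
      grind
  · have hle := S.seven_mul_sigma_add_three_mul_length_le_of_adjacent (i := 2) (j := 1) (.inr rfl)
      h2 (by grind)
    grind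
  · have hle := S.seven_mul_sigma_add_three_mul_length_le_of_adjacent (i := 0) (j := 1) (.inl rfl)
      h0 (by grind)
    grind
  by_cases h1 : 1 ∈ w
  · have hle := S.seven_mul_sigma_add_three_mul_length_le_of_adjacent (i := 1) (j := 0) (.inr rfl)
      h1 (by grind)
    grind
  · obtain rfl : w = [] := by
      refine List.eq_nil_iff_forall_not_mem.2 fun k hk => ?_
      rcases hletter k with rfl | rfl | rfl
      exacts [h0 hk, h1 hk, h2 hk]
    rw [wordProd_nil, S.sigma_one, List.length_nil]
    grind

end Bounds

end BraidLinkInvariants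

/-- **Corollary** (Feller): for every positive braid `β` on `4` strands,
`-σ(β) ≥ (5/12)·b₁(β) - 7/4`. -/
theorem neg_sigma_ge_five_twelfths_betti_sub (S : BraidLinkInvariants)
    (w : List (Fin (4 - 1))) :
    (5 / 12 : ℝ) * (S.betti 4 (wordProd 4 w) : ℝ) - 7 / 4
      ≤ -(S.sigma 4 (wordProd 4 w) : ℝ) := by
  have hbound : (7 : ℝ) * S.sigma 4 (wordProd 4 w) + 3 * S.betti 4 (wordProd 4 w) ≤ 12 :=
    mod_cast S.seven_mul_sigma_add_three_mul_betti_le w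
  linarith [(S.betti 4 (wordProd 4 w)).cast_nonneg (α := ℝ)]
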